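/- Suppose the digraph is acyclic, all edge weights are positive, and the first n−1 edges form a rooted in-branching with root the vertex indexed n−1. Then the (n−1)×(n−1) matrix R̃ * W * Rᵀ is invertible, and for every edge index k the (k,k) entry of the m×m matrix Rᵀ * (R̃ * W * Rᵀ)⁻¹ * R̃ equals the reciprocal of Σ_{e : tail e = tail k} w e (the sum of the weights of all edges sharing the tail of edge k). -/

import Mathlib

open Matrix

theorem aux_unit {ι : Type*} [Fintype ι] [DecidableEq ι] (L : Matrix ι ι ℝ) (f : ι → ℕ)
    (hd : ∀ i, L i i ≠ 0) (hf : ∀ i j, i ≠ j → L i j ≠ 0 → f j < f i) : IsUnit L := by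
  rw [← Matrix.mulVec_injective_iff_isUnit]
  rw [← Matrix.coe_mulVecLin, ← LinearMap.ker_eq_bot, LinearMap.ker_eq_bot']
  intro x hx
  have key : ∀ N : ℕ, ∀ i, f i = N → x i = 0 := by
    intro N
    induction N using Nat.strong_induction_on with
    | _ N ih =>
      intro i hi
      have h1 : ∑ j, L i j * x j = 0 := by
        have := congrFun hx i
        simpa [Matrix.mulVec, dotProduct] using this
      rw [Finset.sum_eq_single i] at h1
      · exact (mul_eq_zero.mp h1).resolve_left (hd i)
      · intro j _ hj
        by_cases hL : L i j = 0
        · simp [hL]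
        · rw [ih (f j) (hi ▸ hf i j hj.symm hL) j rfl, mul_zero]
      · simp
  funext i
  exact key _ i rfl

theorem aux_inv_zero {ι : Type*} [Fintype ι] [DecidableEq ι] (L : Matrix ι ι ℝ) (f : ι → ℕ)
    (hd : ∀ i, L i i ≠ 0) (hf : ∀ i j, i ≠ j → L i j ≠ 0 → f j < f i)
    (X : Matrix ι ι ℝ) (hX : L * X = 1) (i : ι) :
    ∀ N : ℕ, ∀ j, f j = N → j ≠ i → f j ≤ f i → X j i = 0 := by
  intro N
  induction N using Nat.strong_induction_on with
  | _ N ih =>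
    intro j hj hji hle
    have h1 : ∑ l, L j l * X l i = 0 := by
      have := congrFun (congrFun hX j) i
      rwa [Matrix.mul_apply, Matrix.one_apply_ne hji] at this
    rw [Finset.sum_eq_single j] at h1
    · exact (mul_eq_zero.mp h1).resolve_left (hd j)
    · intro l _ hl
      by_cases hL : L j l = 0
      · simp [hL]
      · have h2 := hf j l hl.symm hL
        rw [ih (f l) (hj ▸ h2) l rfl (by rintro rfl; omega) (by omega), mul_zero]
    · simp

theorem aux_inv_diag {ι : Type*} [Fintype ι] [DecidableEq ι] (L : Matrix ι ι ℝ) (f : ι → ℕ)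
    (hd : ∀ i, L i i ≠ 0) (hf : ∀ i j, i ≠ j → L i j ≠ 0 → f j < f i)
    (X : Matrix ι ι ℝ) (hX : L * X = 1) (i : ι) : X i i = (L i i)⁻¹ := by
  have h1 : ∑ l, L i l * X l i = 1 := by
    have := congrFun (congrFun hX i) i
    rwa [Matrix.mul_apply, Matrix.one_apply_eq] at this
  rw [Finset.sum_eq_single i] at h1
  · exact eq_inv_of_mul_eq_one_right h1
  · intro l _ hl
    by_cases hL : L i l = 0
    · simp [hL]
    · have h2 := hf i l hl.symm hL
      rw [aux_inv_zero L f hd hf X hX i _ l rfl hl h2.le, mul_zero]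
  · simp

theorem aux_rank {n m : ℕ} (tail head : Fin m → Fin n)
    (hacyclic : ∀ v : Fin n,
      ¬ Relation.TransGen (fun a b => ∃ e, tail e = a ∧ head e = b) v v) :
    ∃ f : Fin n → ℕ, ∀ e, f (head e) < f (tail e) := by
  classical
  refine ⟨fun v => (Finset.univ.filter (fun u =>
    Relation.TransGen (fun a b => ∃ e, tail e = a ∧ head e = b) v u)).card, fun e => ?_⟩
  apply Finset.card_lt_card
  rw [Finset.ssubset_iff_of_subset]
  · refine ⟨head e, ?_, ?_⟩
    · simpa using Relation.TransGen.single ⟨e, rfl, rfl⟩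
    · simpa using hacyclic (head e)
  · intro u hu
    simp only [Finset.mem_filter, Finset.mem_univ, true_and] at hu ⊢
    exact Relation.TransGen.head ⟨e, rfl, rfl⟩ hu

/-- For an acyclic weighted digraph with positive weights whose first
`n-1` edges form a rooted in-branching with root the vertex `n-1`, the matrix
`R̃ * W * Rᵀ` is invertible and the `(k,k)` entry of `Rᵀ * (R̃ * W * Rᵀ)⁻¹ * R̃` is the
reciprocal of the sum of the weights of all edges sharing the tail of edge `k`. -/
theorem diagonal_entry_eq_inv_outdegree_weight_sum
    (n m : ℕ) (hn : 2 ≤ n) (hm : 1 ≤ m) (hmn : n - 1 ≤ m)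
    (tail head : Fin m → Fin n) (hth : ∀ e, tail e ≠ head e)
    (w : Fin m → ℝ) (hw : ∀ e, 0 < w e)
    (E : Matrix (Fin n) (Fin m) ℝ)
    (hE : ∀ v e, E v e = if v = tail e then 1 else if v = head e then -1 else 0)
    (A : Matrix (Fin n) (Fin m) ℝ)
    (hA : ∀ v e, A v e = if v = tail e then 1 else 0)
    (W : Matrix (Fin m) (Fin m) ℝ) (hW : W = Matrix.diagonal w)
    (hacyclic : ∀ v : Fin n,
      ¬ Relation.TransGen (fun a b => ∃ e, tail e = a ∧ head e = b) v v)
    (root : Fin n) (hroot : root = ⟨n - 1, by omega⟩)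
    -- the first n-1 edges form a rooted in-branching with root `root`:
    (hinj : Function.Injective (fun i : Fin (n - 1) => tail ⟨i.val, lt_of_lt_of_le i.2 hmn⟩))
    (hnotroot : ∀ i : Fin (n - 1), tail ⟨i.val, lt_of_lt_of_le i.2 hmn⟩ ≠ root)
    (hsurj : ∀ v : Fin n, v ≠ root → ∃ i : Fin (n - 1), tail ⟨i.val, lt_of_lt_of_le i.2 hmn⟩ = v)
    (hreach : ∀ v : Fin n, Relation.ReflTransGen
      (fun a b => ∃ e : Fin m, e.val < n - 1 ∧ tail e = a ∧ head e = b) v root)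
    (Eτ : Matrix (Fin n) (Fin (n - 1)) ℝ)
    (hEτ : Eτ = E.submatrix id (fun i : Fin (n - 1) => ⟨i.val, lt_of_lt_of_le i.2 hmn⟩))
    (Ec : Matrix (Fin n) (Fin (m - (n - 1))) ℝ)
    (hEc : Ec = E.submatrix id
      (fun j : Fin (m - (n - 1)) => ⟨n - 1 + j.val, by have := j.2; omega⟩))
    (Aτ : Matrix (Fin n) (Fin (n - 1)) ℝ)
    (hAτ : Aτ = A.submatrix id (fun i : Fin (n - 1) => ⟨i.val, lt_of_lt_of_le i.2 hmn⟩))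
    (Ac : Matrix (Fin n) (Fin (m - (n - 1))) ℝ)
    (hAc : Ac = A.submatrix id
      (fun j : Fin (m - (n - 1)) => ⟨n - 1 + j.val, by have := j.2; omega⟩))
    (Tτ : Matrix (Fin (n - 1)) (Fin (m - (n - 1))) ℝ)
    (hTτ : Tτ = (Eτᵀ * Eτ)⁻¹ * Eτᵀ * Ec)
    (R : Matrix (Fin (n - 1)) (Fin m) ℝ)
    (hR : ∀ (i : Fin (n - 1)) (j : Fin m), R i j =
      if h : j.val < n - 1 then (if i.val = j.val then 1 else 0)
      else Tτ i ⟨j.val - (n - 1), by have := j.2; omega⟩)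
    (T'τ : Matrix (Fin (n - 1)) (Fin (m - (n - 1))) ℝ)
    (hT'τ : T'τ = (Aτᵀ * Aτ)⁻¹ * Aτᵀ * Ac)
    (R' : Matrix (Fin (n - 1)) (Fin m) ℝ)
    (hR' : ∀ (i : Fin (n - 1)) (j : Fin m), R' i j =
      if h : j.val < n - 1 then (if i.val = j.val then 1 else 0)
      else T'τ i ⟨j.val - (n - 1), by have := j.2; omega⟩) :
    IsUnit (R' * W * Rᵀ) ∧
    ∀ k : Fin m, (Rᵀ * (R' * W * Rᵀ)⁻¹ * R') k k =
      (∑ e ∈ Finset.univ.filter (fun e => tail e = tail k), w e)⁻¹ := by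
  classical
  obtain ⟨f, hf⟩ := aux_rank tail head hacyclic
  set ed : Fin (n - 1) → Fin m := fun i => ⟨i.val, lt_of_lt_of_le i.2 hmn⟩ with hed
  set ec : Fin (m - (n - 1)) → Fin m := fun j => ⟨n - 1 + j.val, by have := j.2; omega⟩ with hec
  set t : Fin (n - 1) → Fin n := fun i => tail (ed i) with ht
  have hedt : ∀ i, tail (ed i) = t i := fun i => rfl
  have htail : ∀ e, tail e ≠ root := by
    intro e he
    have h1 : Relation.ReflTransGen (fun a b => ∃ e, tail e = a ∧ head e = b) (head e) root :=
      Relation.ReflTransGen.mono (fun a b ⟨e, _, h⟩ => ⟨e, h⟩) _ _ (hreach (head e))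
    exact hacyclic root (Relation.TransGen.head' ⟨e, he, rfl⟩ h1)
  have hsum : ∀ g : Fin n → ℝ, ∑ v, g v = g root + ∑ i, g (t i) := by
    intro g
    rw [← Finset.add_sum_erase _ _ (Finset.mem_univ root)]
    congr 1
    have : Finset.univ.erase root = Finset.univ.image t := by
      ext v
      simp only [Finset.mem_erase, Finset.mem_univ, and_true, Finset.mem_image, true_and]
      constructor
      · intro h; exact hsurj v h
      · rintro ⟨i, rfl⟩; exact hnotroot i
    rw [this, Finset.sum_image (fun a _ b _ h => hinj h)]
  have htinj : ∀ i j, t i = t j ↔ i = j := fun i j => ⟨fun h => hinj h, fun h => h ▸ rfl⟩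
  have htr : ∀ i, t i ≠ root := hnotroot
  set B : Matrix (Fin (n - 1)) (Fin m) ℝ := E.submatrix t id with hB
  set Bτ : Matrix (Fin (n - 1)) (Fin (n - 1)) ℝ := E.submatrix t ed with hBτ
  set P : Matrix (Fin (n - 1)) (Fin m) ℝ := A.submatrix t id with hP
  let C : Matrix (Fin n) (Fin (n - 1)) ℝ :=
    fun v i => (if v = t i then 1 else 0) - (if v = root then 1 else 0)
  have hCB : E = C * B := by
    ext v e
    rw [Matrix.mul_apply]
    by_cases hv : v = root
    · subst hv
      have h0 : ∑ v, E v e = 0 := by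
        have : ∀ v, E v e = (if v = tail e then 1 else 0) - (if v = head e then 1 else 0) := by
          intro v
          rw [hE]
          have := hth e
          by_cases h1 : v = tail e
          · subst h1; simp [this]
          · by_cases h2 : v = head e
            · subst h2; simp [h1]
            · simp [h1, h2]
        simp [this]
      rw [hsum] at h0
      have : ∀ i, C v i = -1 := by
        intro i; simp [C, (htr i).symm]
      simp only [this, hB, Matrix.submatrix_apply, id, neg_mul, one_mul, Finset.sum_neg_distrib]
      linarith
    · obtain ⟨i, hi⟩ := hsurj v hv
      change t i = v at hi
      subst hi
      have : ∀ j, C (t i) j = if i = j then 1 else 0 := by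
        intro j; simp [C, htr i, htinj]
      simp [this, hB]
  have hEτC : Eτ = C * Bτ := by
    rw [hEτ]; conv_lhs => rw [hCB]
    ext v e; simp [Matrix.mul_apply, hB, hBτ]
  have hBτu : IsUnit Bτ := by
    rw [← Matrix.isUnit_transpose]
    apply aux_unit _ (fun i => f (t i))
    · intro i; simp [hBτ, hE, ht]
    · intro i j hij h
      simp only [hBτ, Matrix.transpose_apply, Matrix.submatrix_apply, hE, hedt, htinj, hij.symm,
        if_false] at h
      have h2 : t j = head (ed i) := by by_contra h3; simp [h3] at h
      simp only [h2]; exact hf (ed i)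
  have hBτd : IsUnit Bτ.det := (Matrix.isUnit_iff_isUnit_det _).mp hBτu
  have hEτu : IsUnit (Eτᵀ * Eτ).det := by
    rw [← Matrix.isUnit_iff_isUnit_det, ← Matrix.mulVec_injective_iff_isUnit]
    rw [← Matrix.coe_mulVecLin, ← LinearMap.ker_eq_bot, LinearMap.ker_eq_bot']
    intro x hx
    rw [Matrix.mulVecLin_apply, ← Matrix.conjTranspose_eq_transpose_of_trivial,
      Matrix.conjTranspose_mul_self_mulVec_eq_zero] at hx
    have hx2 : Bτ *ᵥ x = 0 := by
      funext i
      have := congrFun hx (t i)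
      rw [hEτ] at this
      simpa [Matrix.mulVec, dotProduct, hBτ] using this
    have := Matrix.mulVec_injective_iff_isUnit.mpr hBτu
    exact this (by simpa using hx2)
  have hT : Tτ = Bτ⁻¹ * B.submatrix id ec := by
    have h1 : Ec = Eτ * (Bτ⁻¹ * B.submatrix id ec) := by
      rw [hEτC, Matrix.mul_assoc, ← Matrix.mul_assoc Bτ, Matrix.mul_nonsing_inv _ hBτd,
        Matrix.one_mul, hEc]
      conv_lhs => rw [hCB]
      ext v e; simp [Matrix.mul_apply]
    rw [hTτ, h1, Matrix.mul_assoc, ← Matrix.mul_assoc Eτᵀ, ← Matrix.mul_assoc,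
      Matrix.nonsing_inv_mul _ hEτu, Matrix.one_mul]
  have hRB : R = Bτ⁻¹ * B := by
    ext i j
    rw [hR]
    split_ifs with h h2
    · have : j = ed i := Fin.ext h2.symm
      subst this
      have := congrFun (congrFun (Matrix.nonsing_inv_mul _ hBτd) i) i
      rw [Matrix.one_apply_eq, Matrix.mul_apply] at this
      rw [Matrix.mul_apply]; exact this.symm
    · have : j = ed ⟨j, h⟩ := rfl
      have := congrFun (congrFun (Matrix.nonsing_inv_mul _ hBτd) i) ⟨j, h⟩
      rw [Matrix.one_apply_ne (by rintro rfl; exact h2 rfl), Matrix.mul_apply] at this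
      rw [Matrix.mul_apply]; exact this.symm
    · rw [hT, Matrix.mul_apply, Matrix.mul_apply]
      have : ec ⟨j.val - (n - 1), by have := j.2; omega⟩ = j := by
        apply Fin.ext; simp only [hec]; omega
      simp [this]
  have hPP : ∀ i e, P i e = if tail e = t i then 1 else 0 := by
    intro i e; simp [hP, hA, eq_comm]
  have hAA : ∀ e : Fin m, ∀ i, ∑ v, Aτ v i * A v e = P i e := by
    intro e i
    rw [hPP]; simp [hAτ, hA, hedt, eq_comm]
  have hAτ1 : Aτᵀ * Aτ = 1 := by
    ext i j
    have := hAA (ed j) i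
    rw [hPP, hedt] at this
    simp only [htinj] at this
    rw [Matrix.mul_apply, Matrix.one_apply]
    simp only [eq_comm (a := i)]
    rw [← this]
    simp [hAτ]
  have hRP : R' = P := by
    ext i j
    rw [hR']
    split_ifs with h h2
    · have : j = ed i := Fin.ext h2.symm
      subst this
      rw [hPP, hedt]; simp
    · have : j = ed ⟨j, h⟩ := rfl
      rw [hPP, this, hedt, if_neg]
      intro h3
      have h4 := (htinj _ _).mp h3
      subst h4; exact h2 rfl
    · rw [hT'τ, hAτ1, inv_one, Matrix.one_mul, Matrix.mul_apply, ← hAA]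
      have : ec ⟨j.val - (n - 1), by have := j.2; omega⟩ = j := by
        apply Fin.ext; simp only [hec]; omega
      simp [hAc, this]
  set L : Matrix (Fin (n - 1)) (Fin (n - 1)) ℝ := P * W * Bᵀ with hL
  have hLij : ∀ i j, L i j = ∑ e ∈ Finset.univ.filter (fun e => tail e = t i), w e * E (t j) e := by
    intro i j
    rw [hL, hW, Matrix.mul_apply, Finset.sum_filter]
    apply Finset.sum_congr rfl
    intro e _
    rw [Matrix.mul_diagonal, hPP]
    simp [hB]
  have hLd : ∀ i, L i i = ∑ e ∈ Finset.univ.filter (fun e => tail e = t i), w e := by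
    intro i
    rw [hLij]
    apply Finset.sum_congr rfl
    intro e he
    rw [hE, if_pos (Finset.mem_filter.mp he).2.symm, mul_one]
  have hLd0 : ∀ i, L i i ≠ 0 := by
    intro i
    rw [hLd]
    exact (Finset.sum_pos (fun e _ => hw e) ⟨ed i, by simp [hedt]⟩).ne'
  have hLf : ∀ i j, i ≠ j → L i j ≠ 0 → f (t j) < f (t i) := by
    intro i j hij h
    rw [hLij] at h
    obtain ⟨e, he, hne⟩ := Finset.exists_ne_zero_of_sum_ne_zero h
    have he' := (Finset.mem_filter.mp he).2
    rw [hE, he', if_neg (fun h => hij ((htinj _ _).mp h).symm)] at hne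
    have h2 : t j = head e := by by_contra h3; simp [h3] at hne
    rw [h2, ← he']; exact hf e
  have hLu : IsUnit L := aux_unit L (fun i => f (t i)) hLd0 hLf
  have hLdet : IsUnit L.det := (Matrix.isUnit_iff_isUnit_det _).mp hLu
  have hBtd : IsUnit (Bτᵀ).det := by rwa [Matrix.det_transpose]
  have hM : R' * W * Rᵀ = L * (Bτᵀ)⁻¹ := by
    rw [hRP, hRB, Matrix.transpose_mul, Matrix.transpose_nonsing_inv, ← Matrix.mul_assoc]
  have hMu : IsUnit (R' * W * Rᵀ) := by
    rw [hM]
    exact hLu.mul ((Matrix.isUnit_nonsing_inv_iff).mpr ((Matrix.isUnit_iff_isUnit_det _).mpr hBtd))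
  refine ⟨hMu, fun k => ?_⟩
  have hK : Rᵀ * (R' * W * Rᵀ)⁻¹ * R' = Bᵀ * (L⁻¹ * P) := by
    rw [hM, Matrix.mul_inv_rev, Matrix.nonsing_inv_nonsing_inv _ hBtd, hRP, hRB,
      Matrix.transpose_mul, Matrix.transpose_nonsing_inv, Matrix.mul_assoc Bᵀ,
      ← Matrix.mul_assoc (Bτᵀ)⁻¹, Matrix.nonsing_inv_mul _ hBtd, Matrix.one_mul, Matrix.mul_assoc]
  obtain ⟨i, hi⟩ := hsurj (tail k) (htail k)
  change t i = tail k at hi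
  have hLL := Matrix.mul_nonsing_inv _ hLdet
  have hLP : ∀ j, (L⁻¹ * P) j k = L⁻¹ j i := by
    intro j
    rw [Matrix.mul_apply, Finset.sum_eq_single i]
    · simp [hPP, hi]
    · intro l _ hl
      rw [hPP, ← hi, if_neg (fun h => hl ((htinj _ _).mp h).symm), mul_zero]
    · simp
  rw [hK, Matrix.mul_apply, Finset.sum_eq_single i]
  · rw [hLP, aux_inv_diag L (fun i => f (t i)) hLd0 hLf _ hLL, hLd, hi]
    simp [hB, hE, hi]
  · intro j _ hj
    rw [hLP]
    by_cases h2 : t j = head k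
    · have h3 := hf k
      rw [← h2, ← hi] at h3
      rw [aux_inv_zero L (fun i => f (t i)) hLd0 hLf _ hLL i _ j rfl hj h3.le, mul_zero]
    · simp [hB, hE, ← hi, htinj, hj, h2]
  · simp
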